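/- arXiv:1102.0072 — 2 statements merged into one kernel-verified Lean document; each statement's English description precedes it below -/
import Mathlib

section
/- For every field F and every natural number n ≥ 2 there exists a tensor T : [n] × [n] × [n] → F taking only the values 0 and 1 whose tensor rank over F is exactly 3n − 2H(n−1) − ⌊lg(n−1)⌋ − 2, where H(m) is the number of 1s in the binary expansion of m. In particular this rank is at least 3n − C·lg n for an absolute constant C. -/
/-- The tensor rank of an order-3 tensor `T : [n₁] × [n₂] × [n₃] → F`:
the least `r` such that `T` is the sum of `r` simple tensors. -/
noncomputable def rank3 {F : Type*} [Field F] {n1 n2 n3 : ℕ}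
    (T : Fin n1 → Fin n2 → Fin n3 → F) : ℕ :=
  sInf {r : ℕ | ∃ (a : Fin r → Fin n1 → F) (b : Fin r → Fin n2 → F) (c : Fin r → Fin n3 → F),
    ∀ i j k, T i j k = ∑ l, a l i * b l j * c l k}

/-- `T` is a sum of `r` simple tensors (arbitrary index types). -/
def RL {F : Type} [Field F] {α β γ : Type} (r : ℕ) (T : α → β → γ → F) : Prop :=
  ∃ (a : Fin r → α → F) (b : Fin r → β → F) (c : Fin r → γ → F),
    ∀ i j k, T i j k = ∑ l, a l i * b l j * c l k

section
variable {F : Type} [Field F]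

lemma RL.comp {α β γ α' β' γ' : Type} {r : ℕ} {T : α → β → γ → F} (h : RL r T)
    (f : α' → α) (g : β' → β) (e : γ' → γ) : RL r (fun i j k => T (f i) (g j) (e k)) := by
  obtain ⟨a, b, c, h⟩ := h
  exact ⟨fun l i => a l (f i), fun l j => b l (g j), fun l k => c l (e k), fun i j k => h _ _ _⟩

lemma RL.swap12 {α β γ : Type} {r : ℕ} {T : α → β → γ → F} (h : RL r T) :
    RL r (fun j i k => T i j k) := by
  obtain ⟨a, b, c, h⟩ := h
  exact ⟨b, a, c, fun j i k => by simp only [h, mul_comm (a _ _)]⟩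

lemma RL.swap13 {α β γ : Type} {r : ℕ} {T : α → β → γ → F} (h : RL r T) :
    RL r (fun k j i => T i j k) := by
  obtain ⟨a, b, c, h⟩ := h
  refine ⟨c, b, a, fun k j i => ?_⟩
  simp only [h]
  exact Finset.sum_congr rfl fun l _ => by ring

lemma steinitz {M ι : Type} [AddCommGroup M] [Module F M] [Fintype ι] {r : ℕ}
    (v : Fin r → M) (u : ι → M) (hu : LinearIndependent F u)
    (hs : ∀ x, u x ∈ Submodule.span F (Set.range v)) :
    ∃ (r' : ℕ) (p : Fin r' → Fin r), r' + Fintype.card ι ≤ r ∧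
      ∀ l, v l ∈ Submodule.span F (Set.range u) ⊔ Submodule.span F (Set.range (v ∘ p)) := by
  classical
  have h1 : LinearIndepOn F id (Set.range u) := hu.linearIndepOn_id
  obtain ⟨b, hb1, hb2, hb3, hb4⟩ :=
    exists_linearIndepOn_id_extension (K := F) h1 (Set.subset_union_left (t := Set.range v))
  have hfin : (Set.range u ∪ Set.range v).Finite := (Set.finite_range u).union (Set.finite_range v)
  have hbf : b.Finite := hfin.subset hb1
  have hbs : b ⊆ Submodule.span F (Set.range v) := by
    intro x hx
    rcases hb1 hx with ⟨y, rfl⟩ | h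
    · exact hs y
    · exact Submodule.subset_span h
  haveI : Fintype b := hbf.fintype
  have hcard : b.ncard ≤ r := by
    have e1 : Module.finrank F (Submodule.span F b) = b.ncard := by
      rw [finrank_span_set_eq_card hb4]
      exact (Set.ncard_eq_toFinset_card' b).symm
    rw [← e1]
    calc _ ≤ Module.finrank F (Submodule.span F (Set.range v)) := by
          haveI : FiniteDimensional F (Submodule.span F (Set.range v)) :=
            FiniteDimensional.span_of_finite F (Set.finite_range v)
          exact Submodule.finrank_mono (Submodule.span_le.2 hbs)
      _ ≤ Fintype.card (Fin r) := finrank_range_le_card v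
      _ = r := by simp
  have hd : (b \ Set.range u).ncard + Fintype.card ι ≤ r := by
    have h2 : (Set.range u).ncard = Fintype.card ι := by
      rw [← Nat.card_eq_fintype_card]
      exact Set.ncard_range_of_injective hu.injective
    rw [← h2, Set.ncard_diff_add_ncard_of_subset hb2 hbf]
    exact hcard
  have hsub : ∀ x : ↥(b \ Set.range u), ∃ l, v l = x := by
    rintro ⟨x, hx, hx'⟩
    rcases hb1 hx with h | ⟨l, h⟩
    · exact absurd h hx'
    · exact ⟨l, h⟩
  choose q hq using hsub
  haveI : Finite ↥(b \ Set.range u) := (hbf.subset Set.diff_subset).to_subtype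
  let e : Fin (b \ Set.range u).ncard ≃ ↥(b \ Set.range u) := (Finite.equivFin _).symm
  refine ⟨_, q ∘ e, hd, fun l => ?_⟩
  rw [← Submodule.span_union]
  refine Submodule.span_mono ?_ (hb3 (Or.inr ⟨l, rfl⟩))
  intro x hx
  by_cases hxu : x ∈ Set.range u
  · exact Or.inl hxu
  · right
    refine ⟨e.symm ⟨x, hx, hxu⟩, ?_⟩
    simp [hq]

/-- Elimination of linearly independent slices. -/
lemma RL.elim {α α' β γ ι : Type} [Fintype ι] {r : ℕ} {T : α → β → γ → F} (h : RL r T)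
    (p : ι → α) (hp : LinearIndependent F (fun x => T (p x))) (q : α' → α) :
    ∃ (r' : ℕ) (c : α' → ι → F), r' + Fintype.card ι ≤ r ∧
      RL r' (fun i j k => T (q i) j k + ∑ x, c i x * T (p x) j k) := by
  classical
  obtain ⟨a, b, c, h⟩ := h
  let v : Fin r → β → γ → F := fun l j k => b l j * c l k
  have hT : ∀ i, T i = ∑ l, a l i • v l := by
    intro i; ext j k
    simp [h, v, Finset.sum_apply, mul_assoc]
  have hTs : ∀ i, T i ∈ Submodule.span F (Set.range v) := by
    intro i
    rw [hT]
    exact Submodule.sum_mem _ fun l _ => Submodule.smul_mem _ _ (Submodule.subset_span ⟨l, rfl⟩)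
  obtain ⟨r', s, hr, hv⟩ := steinitz v (fun x => T (p x)) hp (fun x => hTs _)
  have key : ∀ i, ∃ (d : ι → F) (w : Fin r' → F),
      T (q i) = ∑ x, d x • T (p x) + ∑ l, w l • v (s l) := by
    intro i
    have : T (q i) ∈ Submodule.span F (Set.range (fun x => T (p x))) ⊔
        Submodule.span F (Set.range (v ∘ s)) := by
      rw [hT]
      exact Submodule.sum_mem _ fun l _ => Submodule.smul_mem _ _ (hv l)
    obtain ⟨y, hy, z, hz, hyz⟩ := Submodule.mem_sup.1 this
    obtain ⟨d, rfl⟩ := (Submodule.mem_span_range_iff_exists_fun F).1 hy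
    obtain ⟨w, rfl⟩ := (Submodule.mem_span_range_iff_exists_fun F).1 hz
    exact ⟨d, w, hyz.symm⟩
  choose d w hdw using key
  refine ⟨r', fun i x => - d i x, hr, fun l i => w i l, fun l => b (s l), fun l => c (s l), ?_⟩
  intro i j k
  beta_reduce; rw [hdw i]
  simp [Finset.sum_apply, v, mul_assoc]

/-- There is a zero-one tensor of the given shape with rank at least `R`. -/
def Good (F : Type) [Field F] (a b c R : ℕ) : Prop :=
  ∃ T : Fin a → Fin b → Fin c → F, (∀ i j k, T i j k = 0 ∨ T i j k = 1) ∧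
    ∀ r, RL r T → R ≤ r

lemma good_of {α β γ : Type} [Fintype α] [Fintype β] [Fintype γ] {a b c R : ℕ}
    (ha : Fintype.card α ≤ a) (hb : Fintype.card β ≤ b) (hc : Fintype.card γ ≤ c)
    (T : α → β → γ → F) (h01 : ∀ i j k, T i j k = 0 ∨ T i j k = 1)
    (hR : ∀ r, RL r T → R ≤ r) : Good F a b c R := by
  classical
  obtain ⟨e⟩ : Nonempty (α ↪ Fin a) := Function.Embedding.nonempty_of_card_le (by simpa using ha)
  obtain ⟨f⟩ : Nonempty (β ↪ Fin b) := Function.Embedding.nonempty_of_card_le (by simpa using hb)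
  obtain ⟨g⟩ : Nonempty (γ ↪ Fin c) := Function.Embedding.nonempty_of_card_le (by simpa using hc)
  let φ : α × β × γ → Fin a × Fin b × Fin c := fun x => (e x.1, f x.2.1, g x.2.2)
  have hφ : Function.Injective φ := by
    rintro ⟨x, y, z⟩ ⟨x', y', z'⟩ h
    simpa [φ] using h
  let U : Fin a × Fin b × Fin c → F := Function.extend φ (fun x => T x.1 x.2.1 x.2.2) 0
  refine ⟨fun i j k => U (i, j, k), ?_, ?_⟩
  · intro i j k
    simp only [U, Function.extend_def]
    split_ifs
    · exact h01 _ _ _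
    · left; rfl
  · intro r hr
    apply hR
    have := hr.comp e f g
    convert this using 4 with i j k
    exact (hφ.extend_apply (fun x => T x.1 x.2.1 x.2.2) 0 (i, j, k)).symm

/-- Doubling construction. -/
def dbl {m K : ℕ} (S : Fin m → Fin m → Fin K → F) :
    Fin m ⊕ Fin m → Fin m ⊕ Fin m → Option (Fin K) → F
  | .inl i, .inl j, some l => S i j l
  | .inl i, .inr j, none => if i = j then 1 else 0
  | .inr i, .inl j, none => if i = j then 1 else 0
  | _, _, _ => 0

lemma good_dbl {m K R : ℕ} (h : Good F m m K R) {m' : ℕ} (hm : 2 * m ≤ m') :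
    Good F m' m' (K + 1) (R + 2 * m) := by
  classical
  obtain ⟨S, h01, hR⟩ := h
  refine good_of (α := Fin m ⊕ Fin m) (β := Fin m ⊕ Fin m) (γ := Option (Fin K))
    (by simp; omega) (by simp; omega) (by simp) (dbl S) ?_ ?_
  · rintro (i | i) (j | j) (_ | l) <;> simp only [dbl] <;> first | exact h01 _ _ _ | skip
    all_goals first | (split_ifs <;> simp; done) | simp
  · intro r hr
    have l1 : LinearIndependent F (fun x : Fin m => dbl S (.inr x)) := by
      rw [Fintype.linearIndependent_iff]
      intro g hg i
      have := congrFun (congrFun hg (.inl i)) none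
      simpa [Finset.sum_apply, dbl] using this
    obtain ⟨r1, c, h1, hr1⟩ := hr.elim (Sum.inr : Fin m → _) l1 (Sum.inl : Fin m → _)
    have hr1' := hr1.swap12
    have l2 : LinearIndependent F (fun y : Fin m => fun (i : Fin m) (k : Option (Fin K)) =>
        dbl S (.inl i) (.inr y) k + ∑ x, c i x * dbl S (.inr x) (.inr y) k) := by
      rw [Fintype.linearIndependent_iff]
      intro g hg i
      have := congrFun (congrFun hg i) none
      simpa [Finset.sum_apply, dbl] using this
    obtain ⟨r2, d, h2, hr2⟩ := hr1'.elim (Sum.inr : Fin m → _) l2 (Sum.inl : Fin m → _)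
    have h3 := hR r2 (by
      have := hr2.swap12.comp id id (some : Fin K → _)
      simpa [dbl] using this)
    simp at h1 h2
    omega

/-- The final extension: adds a column and single-entry layers. -/
def ext3 {m K N : ℕ} (hN : N ≤ m) (S : Fin m → Fin m → Fin K → F) :
    Fin m → Option (Fin m) → Fin K ⊕ Fin N → F
  | i, some j, .inl l => S i j l
  | i, none, .inr x => if i = Fin.castLE hN x then 1 else 0
  | _, _, _ => 0

lemma good_ext {m K R N : ℕ} (h : Good F m m K R) (hN : N ≤ m) :
    Good F (m + 1) (m + 1) (K + N) (R + N) := by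
  classical
  obtain ⟨S, h01, hR⟩ := h
  refine good_of (α := Fin m) (β := Option (Fin m)) (γ := Fin K ⊕ Fin N)
    (by simp) (by simp) (by simp) (ext3 hN S) ?_ ?_
  · rintro i (_ | j) (l | l) <;> simp only [ext3] <;> first | exact h01 _ _ _ | skip
    all_goals first | (split_ifs <;> simp; done) | simp
  · intro r hr
    have hr' := hr.swap13
    have l1 : LinearIndependent F (fun (x : Fin N) (j : Option (Fin m)) (i : Fin m) =>
        ext3 hN S i j (.inr x)) := by
      rw [Fintype.linearIndependent_iff]
      intro g hg x
      have := congrFun (congrFun hg none) (Fin.castLE hN x)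
      simpa [Finset.sum_apply, ext3] using this
    obtain ⟨r1, c, h1, hr1⟩ := hr'.elim (Sum.inr : Fin N → _) l1 (Sum.inl : Fin K → _)
    have h3 := hR r1 (by
      have := hr1.swap13.comp id (some : Fin m → _) id
      simpa [ext3] using this)
    simp at h1
    omega

lemma good_mono {a b c R R' : ℕ} (h : Good F a b c R) (hR : R' ≤ R) : Good F a b c R' := by
  obtain ⟨T, h1, h2⟩ := h
  exact ⟨T, h1, fun r hr => hR.trans (h2 r hr)⟩

lemma good_base (m : ℕ) (hm : 1 ≤ m) :
    Good F m m (Nat.log 2 m + 1) (2 * m + 1 - 2 * (Nat.digits 2 m).sum) := by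
  induction m using Nat.strong_induction_on with
  | _ m ih =>
    by_cases h1 : m = 1
    · subst h1
      refine ⟨fun _ _ _ => 1, by simp, ?_⟩
      rintro r ⟨a, b, c, h⟩
      rcases Nat.eq_zero_or_pos r with rfl | hr
      · simpa using h 0 0 0
      · simp; omega
    · have hk : 1 ≤ m / 2 := by omega
      have := good_dbl (ih (m / 2) (by omega) hk) (m' := m) (by omega)
      have e1 : Nat.log 2 m = Nat.log 2 (m / 2) + 1 := by
        rw [Nat.log_of_one_lt_of_le (by norm_num) (by omega)]
      have e2 : (Nat.digits 2 m).sum = m % 2 + (Nat.digits 2 (m / 2)).sum := by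
        rw [Nat.digits_def' (by norm_num) (by omega)]
        simp
      rw [e1, e2]
      refine good_mono this ?_
      omega

lemma digits_sum_le (m : ℕ) (hm : 1 ≤ m) : (Nat.digits 2 m).sum ≤ Nat.log 2 m + 1 := by
  induction m using Nat.strong_induction_on with
  | _ m ih =>
    by_cases h1 : m = 1
    · subst h1; simp
    · have := ih (m / 2) (by omega) (by omega)
      rw [Nat.log_of_one_lt_of_le (by norm_num) (by omega : 2 ≤ m),
        Nat.digits_def' (by norm_num) (by omega)]
      simp only [List.sum_cons]
      omega

/-- Indicator tensor. -/
noncomputable def ind (F : Type) [Field F] {n : ℕ} (s : Finset (Fin n × Fin n × Fin n)) :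
    Fin n → Fin n → Fin n → F :=
  fun i j k => if (i, j, k) ∈ s then 1 else 0

lemma RL_insert {n r : ℕ} (s : Finset (Fin n × Fin n × Fin n)) (x) (hx : x ∉ s)
    (h : RL r (ind F s)) : RL (r + 1) (ind F (insert x s)) := by
  obtain ⟨a, b, c, h⟩ := h
  refine ⟨Fin.cons (fun i => if i = x.1 then 1 else 0) a,
    Fin.cons (fun i => if i = x.2.1 then 1 else 0) b,
    Fin.cons (fun i => if i = x.2.2 then 1 else 0) c, fun i j k => ?_⟩
  rw [Fin.sum_univ_succ]
  simp only [Fin.cons_zero, Fin.cons_succ]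
  rw [← h]
  obtain ⟨x, y, z⟩ := x
  simp only [ind, Finset.mem_insert, Prod.mk.injEq]
  by_cases h1 : i = x <;> by_cases h2 : j = y <;> by_cases h3 : k = z <;> simp [h1, h2, h3]
  subst h1 h2 h3
  exact hx

lemma RL_ind {n : ℕ} (s : Finset (Fin n × Fin n × Fin n)) : ∃ r, RL r (ind F s) := by
  induction s using Finset.induction_on with
  | empty => exact ⟨0, fun _ _ => 0, fun _ _ => 0, fun _ _ => 0, by simp [ind]⟩
  | insert x s hx ih =>
    obtain ⟨r, h⟩ := ih
    exact ⟨r + 1, RL_insert s x hx h⟩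

lemma rank3_eq {n : ℕ} (T : Fin n → Fin n → Fin n → F) : rank3 T = sInf {r | RL r T} := rfl

lemma RL_rank3 {n : ℕ} (s : Finset (Fin n × Fin n × Fin n)) :
    RL (rank3 (ind F s)) (ind F s) :=
  Nat.sInf_mem (s := {r | RL r (ind F s)}) (RL_ind s)

lemma ivt {n : ℕ} (s : Finset (Fin n × Fin n × Fin n)) :
    ∀ R ≤ rank3 (ind F s), ∃ t, rank3 (ind F (n := n) t) = R := by
  induction s using Finset.induction_on with
  | empty =>
    intro R hR
    have : rank3 (ind F (∅ : Finset (Fin n × Fin n × Fin n))) ≤ 0 :=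
      Nat.sInf_le (s := {r | RL r (ind F _)})
        ⟨fun _ _ => 0, fun _ _ => 0, fun _ _ => 0, by simp [ind]⟩
    exact ⟨∅, by omega⟩
  | insert x s hx ih =>
    intro R hR
    by_cases h : R ≤ rank3 (ind F s)
    · exact ih R h
    · have : rank3 (ind F (insert x s)) ≤ rank3 (ind F s) + 1 :=
        Nat.sInf_le (s := {r | RL r (ind F _)}) (RL_insert s x hx (RL_rank3 s))
      exact ⟨insert x s, by omega⟩

lemma good_exact {n R : ℕ} (h : Good F n n n R) :
    ∃ T : Fin n → Fin n → Fin n → F, (∀ i j k, T i j k = 0 ∨ T i j k = 1) ∧ rank3 T = R := by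
  classical
  obtain ⟨T, h01, hR⟩ := h
  let s : Finset (Fin n × Fin n × Fin n) := {x | T x.1 x.2.1 x.2.2 = 1}
  have hs : ind F s = T := by
    funext i j k
    rcases h01 i j k with h | h <;> simp [ind, s, h]
  obtain ⟨t, ht⟩ := ivt (F := F) s R (hR _ (by have := RL_rank3 (F := F) s; rwa [hs] at this ⊢))
  refine ⟨ind F t, fun i j k => ?_, ht⟩
  simp only [ind]
  split_ifs <;> simp

end

/-- For every field `F` and every `n ≥ 2` there is a 0/1-valued tensor of size `[n]³`
whose rank over `F` is exactly `3n - 2H(n-1) - ⌊lg (n-1)⌋ - 2`, where `H(m)` is the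
number of 1s in the binary expansion of `m`.  In particular this rank is at least
`3n - C·lg n` for an absolute constant `C > 0`. -/
theorem stmt1 : ∃ C : ℕ, 0 < C ∧ ∀ (F : Type) [Field F] (n : ℕ), 2 ≤ n →
    ∃ T : Fin n → Fin n → Fin n → F,
      (∀ i j k, T i j k = 0 ∨ T i j k = 1) ∧
      rank3 T = 3 * n - 2 * (Nat.digits 2 (n - 1)).sum - Nat.log 2 (n - 1) - 2 ∧
      3 * n ≤ rank3 T + C * Nat.log 2 n := by
  refine ⟨7, by norm_num, fun F _ n hn => ?_⟩
  obtain ⟨m, rfl⟩ : ∃ m, n = m + 1 := ⟨n - 1, by omega⟩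
  simp only [Nat.add_sub_cancel]
  have hL : Nat.log 2 m < m := Nat.log_lt_self 2 (by omega)
  have hg := good_ext (good_base (F := F) m (by omega)) (N := m - Nat.log 2 m) (by omega)
  rw [show Nat.log 2 m + 1 + (m - Nat.log 2 m) = m + 1 by omega] at hg
  obtain ⟨T, h1, h2⟩ := good_exact (good_mono hg
    (R' := 3 * (m + 1) - 2 * (Nat.digits 2 m).sum - Nat.log 2 m - 2) (by omega))
  refine ⟨T, h1, h2, ?_⟩
  rw [h2]
  have hd := digits_sum_le m (by omega)
  have hlog : Nat.log 2 m ≤ Nat.log 2 (m + 1) := Nat.log_mono_right (by omega)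
  have hpos : 0 < Nat.log 2 (m + 1) := Nat.log_pos (by norm_num) hn
  omega
end

section
/- Let G be a finite group and d ≥ 2. Then the tensor rank of the group tensor T_G^d over the complex numbers ℂ satisfies rank_ℂ(T_G^d) ≤ |G|^{d/2}. -/
/-- The tensor rank of an order-`d` cube tensor `T : I^d → F`:
the least `r` such that `T` is the sum of `r` simple tensors. -/
noncomputable def tensorRank (F : Type*) [Field F] {d : ℕ} {I : Type*}
    (T : (Fin d → I) → F) : ℕ :=
  sInf {r : ℕ | ∃ v : Fin r → Fin d → I → F, ∀ i, T i = ∑ l, ∏ j, v l j (i j)}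

/-- The order-`d` group tensor of a group `G` over `F`:
`T(g₁, …, g_d) = 1` if `g₁ ⋯ g_d = 1` and `0` otherwise. -/
noncomputable def groupTensor (F : Type*) [Field F] (G : Type*) [Group G] [DecidableEq G]
    (d : ℕ) : (Fin d → G) → F :=
  fun g => if (List.ofFn g).prod = 1 then 1 else 0

lemma pathSum {k : ℕ} (m : ℕ) : ∀ (A : Fin m → Matrix (Fin k) (Fin k) ℂ) (w : Fin k → Fin k → ℂ),
    ∑ f : Fin (m+1) → Fin k, w (f 0) (f (Fin.last m)) * ∏ j : Fin m, A j (f j.castSucc) (f j.succ)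
      = ∑ a, ∑ b, w a b * (List.ofFn A).prod a b := by
  induction m with
  | zero =>
    intro A w
    rw [← (Equiv.funUnique (Fin 1) (Fin k)).symm.sum_comp]
    simp [Matrix.one_apply]
  | succ m ih =>
    intro A w
    rw [← (Fin.consEquiv (fun _ : Fin (m+2) => Fin k)).sum_comp, Fintype.sum_prod_type]
    refine Finset.sum_congr rfl fun a _ => ?_
    have h := ih (fun j => A j.succ) (fun c b => w a b * A 0 a c)
    simp only [List.ofFn_succ, List.prod_cons, Matrix.mul_apply, Finset.mul_sum]
    rw [Finset.sum_comm]
    simp only [← mul_assoc]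
    rw [← h]
    refine Finset.sum_congr rfl fun f _ => ?_
    rw [Fin.prod_univ_succ]
    simp [Fin.consEquiv, ← Fin.succ_last, ← Fin.succ_castSucc, mul_assoc]

lemma tensorRank_le_of_fintype {d : ℕ} {I X : Type*} [Fintype X] (T : (Fin d → I) → ℂ)
    (v : X → Fin d → I → ℂ) (h : ∀ i, T i = ∑ l, ∏ j, v l j (i j)) :
    tensorRank ℂ T ≤ Fintype.card X := by
  refine Nat.sInf_le ⟨fun l => v ((Fintype.equivFin X).symm l), fun i => ?_⟩
  rw [h i, ← (Fintype.equivFin X).symm.sum_comp]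

lemma powSum {N : ℕ} (n : Fin N → ℕ) (d : ℕ) (hd : 2 ≤ d) :
    ((∑ i, n i ^ d : ℕ) : ℝ) ≤ ((∑ i, n i ^ 2 : ℕ) : ℝ) ^ ((d : ℝ) / 2) := by
  set S : ℝ := ((∑ i, n i ^ 2 : ℕ) : ℝ) with hS
  have hS0 : 0 ≤ S := Nat.cast_nonneg _
  have key : ∀ i, (n i : ℝ) ≤ Real.sqrt S := by
    intro i
    apply Real.le_sqrt_of_sq_le
    rw [hS]
    exact_mod_cast Finset.single_le_sum (f := fun i => n i ^ 2) (fun _ _ => Nat.zero_le _)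
      (Finset.mem_univ i)
  have hpow : S ^ ((d : ℝ) / 2) = S * Real.sqrt S ^ (d - 2) := by
    have : S ^ ((d : ℝ) / 2) = Real.sqrt S ^ d := by
      rw [Real.sqrt_eq_rpow, ← Real.rpow_natCast, ← Real.rpow_mul hS0]
      congr 1; ring
    rw [this]
    nth_rw 2 [← Real.sq_sqrt hS0]
    rw [← pow_add]; congr 1; omega
  rw [hpow]
  nth_rw 1 [hS]
  push_cast
  rw [Finset.sum_mul]
  refine Finset.sum_le_sum fun i _ => ?_
  calc (n i : ℝ) ^ d = (n i : ℝ) ^ 2 * (n i : ℝ) ^ (d - 2) := by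
        rw [← pow_add]; congr 1; omega
    _ ≤ _ := by
        gcongr
        exact key i

/-- For any finite group `G` and `d ≥ 2`, the rank of the group tensor `T_G^d` over
the complex numbers is at most `|G|^(d/2)`. -/
theorem stmt7 (G : Type*) [Group G] [Fintype G] [DecidableEq G] (d : ℕ) (hd : 2 ≤ d) :
    (tensorRank ℂ (groupTensor ℂ G d) : ℝ) ≤ (Fintype.card G : ℝ) ^ ((d : ℝ) / 2) := by
  obtain ⟨N, n, -, ⟨e⟩⟩ :=
    IsSemisimpleRing.exists_algEquiv_pi_matrix_of_isAlgClosed ℂ (MonoidAlgebra ℂ G)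
  have hcard : Fintype.card G = ∑ i, n i ^ 2 := by
    rw [← Module.finrank_eq_card_basis (MonoidAlgebra.basis G ℂ), e.toLinearEquiv.finrank_eq,
      Module.finrank_pi_fintype]
    simp [Module.finrank_matrix, sq]
  rw [hcard]
  refine le_trans ?_ (powSum n d hd)
  obtain ⟨m, rfl⟩ : ∃ m, d = m + 1 := ⟨d - 1, by omega⟩
  have hX : Fintype.card (Σ i, (Fin (m+1) → Fin (n i))) = ∑ i, n i ^ (m+1) := by simp
  rw [← hX]
  norm_cast
  let u : ∀ i, Fin (n i) → Fin (n i) → MonoidAlgebra ℂ G :=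
    fun i a b => e.symm (Pi.single i (Matrix.single a b 1))
  have hdec : ∀ x : MonoidAlgebra ℂ G, x = ∑ i, ∑ a, ∑ b, e x i a b • u i a b := by
    intro x
    apply e.injective
    simp only [map_sum, map_smul, u, AlgEquiv.apply_symm_apply]
    conv_lhs => rw [← Finset.univ_sum_single (e x)]
    refine Finset.sum_congr rfl fun i _ => ?_
    conv_lhs => rw [Matrix.matrix_eq_sum_single (e x i)]
    simp only [← Pi.single_smul, Matrix.smul_single, smul_eq_mul, mul_one]
    rw [← LinearMap.single_apply (R := ℂ)]
    simp only [map_sum]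
    rfl
  refine tensorRank_le_of_fintype _ (fun l => Fin.cons
    (fun g => (MonoidAlgebra.of ℂ G g * u l.1 (l.2 0) (l.2 (Fin.last m))).coeff 1)
    (fun j g => e (MonoidAlgebra.of ℂ G g) l.1 (l.2 j.castSucc) (l.2 j.succ))) fun g => ?_
  simp only [Fin.prod_univ_succ, Fin.cons_zero, Fin.cons_succ]
  rw [Fintype.sum_sigma]
  simp only
  have h1 : ∀ i, _ := fun i => pathSum m
    (fun j => e (MonoidAlgebra.of ℂ G (g j.succ)) i)
    (fun a b => (MonoidAlgebra.of ℂ G (g 0) * u i a b).coeff 1)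
  simp only [h1]
  have h2 : ∀ i, (List.ofFn fun j : Fin m => e (MonoidAlgebra.of ℂ G (g j.succ)) i).prod
      = e (MonoidAlgebra.of ℂ G (List.ofFn fun j : Fin m => g j.succ).prod) i := by
    intro i
    rw [map_list_prod, map_list_prod, Pi.list_prod_apply]
    simp [List.map_ofFn, Function.comp_def]
  simp only [h2]
  have h3 : groupTensor ℂ G (m+1) g = (MonoidAlgebra.of ℂ G (g 0) *
      MonoidAlgebra.of ℂ G (List.ofFn fun j : Fin m => g j.succ).prod).coeff 1 := by
    rw [← map_mul]
    simp [groupTensor, List.ofFn_succ, MonoidAlgebra.of_apply, Finsupp.single_apply]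
  rw [h3]
  conv_lhs => rw [hdec (MonoidAlgebra.of ℂ G (List.ofFn fun j : Fin m => g j.succ).prod)]
  simp only [Finset.mul_sum, MonoidAlgebra.coeff_sum, Finsupp.finset_sum_apply, mul_smul_comm,
    MonoidAlgebra.coeff_smul, Finsupp.smul_apply, smul_eq_mul]
  simp only [mul_comm]
end
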